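/- Let Y, Z ∈ ℂ^{N×N} satisfy Yᴴ Y + Zᴴ Z = I_N. Then the characteristic polynomial of the matrix Y (Zᴴ Z) Yᴴ = (Z Yᴴ)ᴴ (Z Yᴴ) equals the characteristic polynomial of Zᴴ Z − (Zᴴ Z)². Consequently, the squared singular values of Z Yᴴ coincide (with multiplicity) with the numbers λ − λ² as λ ranges over the eigenvalues of Zᴴ Z. -/

import Mathlib

open Matrix
open scoped Matrix

/-- Let `Y, Z ∈ ℂ^{N×N}` satisfy `Yᴴ Y + Zᴴ Z = I_N`.  Then
`Y (Zᴴ Z) Yᴴ = (Z Yᴴ)ᴴ (Z Yᴴ)`, and its characteristic polynomial equals the characteristic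
polynomial of `Zᴴ Z − (Zᴴ Z)²`; hence the squared singular values of `Z Yᴴ` are the numbers
`λ − λ²` as `λ` ranges over the eigenvalues of `Zᴴ Z` (with multiplicity). -/
theorem charpoly_cross_term {N : ℕ}
    (Y Z : Matrix (Fin N) (Fin N) ℂ)
    (h : Yᴴ * Y + Zᴴ * Z = 1) :
    (Z * Yᴴ)ᴴ * (Z * Yᴴ) = Y * (Zᴴ * Z) * Yᴴ ∧
    (Y * (Zᴴ * Z) * Yᴴ).charpoly = (Zᴴ * Z - (Zᴴ * Z) ^ 2).charpoly := by
  constructor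
  · simp only [conjTranspose_mul, conjTranspose_conjTranspose, Matrix.mul_assoc]
  · have hY : Yᴴ * Y = 1 - Zᴴ * Z := eq_sub_of_add_eq h
    rw [Matrix.charpoly_mul_comm, ← Matrix.mul_assoc, hY, sub_mul, one_mul, pow_two]
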